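/- Let G be a connected and simply connected solvable Lie group with Lie algebra 𝔤, and let W be the connected Lie subgroup of G corresponding to a Cartan subalgebra 𝔴 of 𝔤. Then the center of G is contained in W. -/

import Mathlib

open Manifold

noncomputable section

/-- `ψ : ℝ → G` is a (smooth) one-parameter subgroup with direction `v` in the tangent
space at the identity. -/
def IsOneParamSubgroup {E : Type*} [NormedAddCommGroup E] [NormedSpace ℝ E]
    {G : Type*} [TopologicalSpace G] [ChartedSpace E G] [Group G]
    (ψ : ℝ → G) (v : E) : Prop :=
  ψ 0 = 1 ∧ (∀ s t : ℝ, ψ (s + t) = ψ s * ψ t) ∧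
  ContMDiff 𝓘(ℝ, ℝ) 𝓘(ℝ, E) (⊤ : ℕ∞) ψ ∧
  (mfderiv 𝓘(ℝ, ℝ) 𝓘(ℝ, E) ψ 0 (1 : ℝ) : E) = v

/-- The adjoint action of `g` on the tangent space at the identity: the differential of
conjugation by `g` at the identity. -/
def AdMap {E : Type*} [NormedAddCommGroup E] [NormedSpace ℝ E]
    {G : Type*} [TopologicalSpace G] [ChartedSpace E G] [Group G]
    (g : G) (w : E) : E :=
  (mfderiv 𝓘(ℝ, E) 𝓘(ℝ, E) (fun x : G => g * x * g⁻¹) (1 : G) w : E)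

/-- The connected (integral) subgroup of `G` corresponding to a set `S` of Lie algebra
elements (via the identification `eq` of the Lie algebra with the tangent space at the
identity): the subgroup generated by the one-parameter subgroups with directions in
`S`. -/
def integralSubgroup {E : Type*} [NormedAddCommGroup E] [NormedSpace ℝ E]
    {G : Type*} [TopologicalSpace G] [ChartedSpace E G] [Group G]
    {L : Type*} [LieRing L] [LieAlgebra ℝ L] (eq : L ≃ₗ[ℝ] E) (S : Set L) : Subgroup G :=
  Subgroup.closure {g : G | ∃ v ∈ S, ∃ ψ : ℝ → G, IsOneParamSubgroup ψ (eq v) ∧ ∃ t : ℝ, g = ψ t}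

/-!
Let `𝔫 = [𝔤, 𝔤]`, a nilpotent ideal with `𝔤 = 𝔴 + 𝔫`, and let `N` be its integral subgroup. Then
`N` is normal and `G = W N`, so a central element is `z = w exp X` with `w ∈ W` and `X ∈ 𝔫`, once
`N = exp 𝔫` is known. Now `Ad (exp X) = Ad w⁻¹` preserves `𝔴`; as `ad X` is nilpotent, `ad X`
preserves `𝔴` too, so `X` normalizes `𝔴` and therefore lies in `𝔴`.

The equality `N = exp 𝔫` is obtained without the Baker-Campbell-Hausdorff formula. If `X` and `Y`
normalize a solvable subalgebra `𝔨` containing `[X, Y]`, then the curve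
`exp (tX) exp (tY) exp (-t(X + Y))` has its logarithmic derivative in `𝔨`, and such a curve stays
in the integral subgroup of `𝔨`: by induction on dimension, after multiplication by a suitable
`exp (b(t) x)` its logarithmic derivative lies in a subalgebra of codimension one. Hence the product
of `exp X` and `exp Y` is `exp (X + Y)` up to deeper and deeper terms of the lower central series.
-/

section DerivedSeries

open LieAlgebra LieModule Module TensorProduct

variable {k L V : Type*} [Field k] [LieRing L] [LieAlgebra k L]
  [AddCommGroup V] [Module k V] [LieRingModule L V] [LieModule k L V]

lemma weight_eq_zero_of_mem_derivedSeries {χ : Dual k L} {v : V} (hv : v ≠ 0)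
    (hχ : ∀ y : L, ⁅y, v⁆ = χ y • v) {x : L} (hx : x ∈ derivedSeries k L 1) : χ x = 0 := by
  have h_le : (derivedSeries k L 1).toSubmodule ≤ LinearMap.ker χ := by
    rw [derivedSeries_def, derivedSeriesOfIdeal_succ, derivedSeriesOfIdeal_zero,
      LieSubmodule.lieIdeal_oper_eq_linear_span', Submodule.span_le]
    rintro _ ⟨a, -, b, -, rfl⟩
    have h_smul : χ ⁅a, b⁆ • v = 0 := by
      rw [← hχ, lie_lie, hχ, hχ, lie_smul, lie_smul, hχ, hχ, smul_smul, smul_smul, mul_comm,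
        sub_self]
    exact (smul_eq_zero.1 h_smul).resolve_right hv
  exact h_le hx

lemma isNilpotent_toEnd_of_quotient {N : LieSubmodule k L V} {x : L}
    (hN : ∀ v ∈ N, ⁅x, v⁆ = 0) (hquot : IsNilpotent (toEnd k L (V ⧸ N) x)) :
    IsNilpotent (toEnd k L V x) := by
  obtain ⟨m, hm⟩ := hquot
  refine ⟨m + 1, LinearMap.ext fun u ↦ ?_⟩
  have h_mem : (toEnd k L V x ^ m) u ∈ N := by
    rw [← LieSubmodule.Quotient.mk_eq_zero']
    have h_comm := LinearMap.congr_fun (Module.End.commute_pow_left_of_commute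
      (LieSubmodule.Quotient.toEnd_comp_mk' N x) m) u
    rw [hm] at h_comm
    exact h_comm.symm
  rw [pow_succ', Module.End.mul_apply]
  exact hN _ h_mem

lemma isNilpotent_toEnd_of_mem_derivedSeries_of_isAlgClosed [IsAlgClosed k] [CharZero k]
    [LieAlgebra.IsSolvable L] {x : L} (hx : x ∈ derivedSeries k L 1) (V : Type*) [AddCommGroup V]
    [Module k V] [FiniteDimensional k V] [LieRingModule L V] [LieModule k L V] :
    IsNilpotent (toEnd k L V x) := by
  induction hn : finrank k V using Nat.strong_induction_on generalizing V with
  | _ n ih =>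
  rcases subsingleton_or_nontrivial V with _ | _
  · exact ⟨1, Subsingleton.elim _ _⟩
  obtain ⟨χ, hχ⟩ := exists_nontrivial_weightSpace_of_isSolvable k L V
  obtain ⟨v, hv_ne⟩ := exists_ne (0 : weightSpace V χ)
  rw [Ne, ← Subtype.coe_inj] at hv_ne
  have hχx : χ x = 0 :=
    weight_eq_zero_of_mem_derivedSeries hv_ne ((mem_weightSpace χ (v : V)).1 v.2) hx
  have h_lt : finrank k (V ⧸ weightSpace V χ) < n := by
    have h_add := Submodule.finrank_quotient_add_finrank (weightSpace V χ).toSubmodule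
    have h_pos : 0 < finrank k (weightSpace V χ) := finrank_pos
    change finrank k (V ⧸ (weightSpace V χ).toSubmodule) < n
    change _ + finrank k (weightSpace V χ) = _ at h_add
    lia
  refine isNilpotent_toEnd_of_quotient (N := weightSpace V χ) (fun u hu ↦ ?_) (ih _ h_lt _ rfl)
  rw [(mem_weightSpace χ u).1 hu, hχx, zero_smul]

lemma isNilpotent_toEnd_of_mem_derivedSeries [CharZero k] [LieAlgebra.IsSolvable L]
    [FiniteDimensional k V] {x : L} (hx : x ∈ derivedSeries k L 1) :
    IsNilpotent (toEnd k L V x) := by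
  let K := AlgebraicClosure k
  have hx_ext : (1 : K) ⊗ₜ[k] x ∈ derivedSeries K (K ⊗[k] L) 1 := by
    rw [derivedSeries_baseChange]
    exact Submodule.tmul_mem_baseChange_of_mem 1 hx
  have h_ext := isNilpotent_toEnd_of_mem_derivedSeries_of_isAlgClosed hx_ext (K ⊗[k] V)
  rw [toEnd_baseChange] at h_ext
  exact (IsNilpotent.map_iff (f := End.baseChangeHom k K V)
    (LinearMap.baseChangeHom_injective k V K)).1 h_ext

lemma isNilpotent_derivedSeries_one [CharZero k] [LieAlgebra.IsSolvable L]
    [FiniteDimensional k L] :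
    LieRing.IsNilpotent (LieIdeal.toLieSubalgebra k L (derivedSeries k L 1)) :=
  (LieAlgebra.isNilpotent_iff_forall (R := k)).2 fun x ↦
    LieSubalgebra.isNilpotent_ad_of_isNilpotent_ad _ (isNilpotent_toEnd_of_mem_derivedSeries x.2)

lemma cartan_sup_derivedSeries [Infinite k] [FiniteDimensional k L] (𝔴 : LieSubalgebra k L)
    [𝔴.IsCartanSubalgebra] : 𝔴.toSubmodule ⊔ (derivedSeries k L 1).toSubmodule = ⊤ := by
  have h_lcs : (posFittingComp k 𝔴 L).toSubmodule ≤ (derivedSeries k L 1).toSubmodule := by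
    refine LE.le.trans (b := (lowerCentralSeries k 𝔴 L 1).toSubmodule)
      ((posFittingComp_le_iInf_lowerCentralSeries k 𝔴 L).trans (iInf_le _ 1)) ?_
    rw [lowerCentralSeries_succ, LieSubmodule.lieIdeal_oper_eq_linear_span', Submodule.span_le]
    rintro _ ⟨a, -, b, -, rfl⟩
    exact LieSubmodule.lie_mem_lie (LieSubmodule.mem_top (a : L)) (LieSubmodule.mem_top _)
  have h_top := congrArg LieSubmodule.toSubmodule
    (isCompl_genWeightSpace_zero_posFittingComp k 𝔴 L).sup_eq_top
  have h_zero : genWeightSpace L (0 : 𝔴 → k) = 𝔴.toLieSubmodule := rootSpace_zero_eq k L 𝔴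
  rw [h_zero, LieSubmodule.sup_toSubmodule] at h_top
  exact top_le_iff.1 (h_top.symm.le.trans (sup_le_sup le_rfl h_lcs))

end DerivedSeries

section OperatorExponential

open NormedSpace Polynomial

variable {E : Type*} [NormedAddCommGroup E] [NormedSpace ℝ E]

lemma eval_exp_of_pow_eq_zero {A : E →L[ℝ] E} {n : ℕ} (hA : A ^ n = 0) (x : E) :
    exp A x = ∑ k ∈ Finset.range n, (k.factorial : ℝ)⁻¹ • (A ^ k) x := by
  have h_sum : exp A = ∑ k ∈ Finset.range n, (k.factorial : ℝ)⁻¹ • A ^ k := by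
    rw [exp_eq_tsum ℝ]
    refine tsum_eq_sum fun k hk ↦ ?_
    rw [pow_eq_zero_of_le (not_lt.1 (Finset.mem_range.not.1 hk)) hA, smul_zero]
  simp [h_sum]

variable [CompleteSpace E] {A : E →L[ℝ] E} {U : Submodule ℝ E}

lemma exp_apply_sub_mem (hU : IsClosed (U : Set E)) (hA : ∀ u ∈ U, A u ∈ U) {x : E}
    (hx : A x ∈ U) : exp A x - x ∈ U := by
  have h_iter (n : ℕ) : A^[n] (A x) ∈ U := by
    induction n with
    | zero => exact hx
    | succ n ih => rw [Function.iterate_succ_apply']; exact hA _ ih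
  have h_sum : HasSum (fun n : ℕ ↦ ((n + 1).factorial : ℝ)⁻¹ • A^[n] (A x)) (exp A x - x) := by
    simpa using (hasSum_nat_add_iff' 1).2
      ((ContinuousLinearMap.apply ℝ E x).hasSum (exp_series_hasSum_exp' (𝕂 := ℝ) A))
  exact hU.mem_of_tendsto h_sum (.of_forall fun s ↦
    Submodule.sum_mem _ fun n _ ↦ Submodule.smul_mem U _ (h_iter n))

lemma exp_apply_mem (hU : IsClosed (U : Set E)) (hA : ∀ u ∈ U, A u ∈ U) {x : E} (hx : x ∈ U) :
    exp A x ∈ U := by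
  simpa using U.add_mem (exp_apply_sub_mem hU hA (hA x hx)) hx

-- For a functional `f` vanishing on `U`, the polynomial `t ↦ f (exp (t • A) u)` has all natural
-- numbers as roots, so its linear coefficient `f (A u)` is zero.
lemma apply_mem_of_exp_apply_mem (hA : IsNilpotent A) (hU : ∀ u ∈ U, exp A u ∈ U) {u : E}
    (hu : u ∈ U) : A u ∈ U := by
  by_contra h_not
  obtain ⟨f, hf_ne, hf⟩ := Submodule.exists_le_ker_of_notMem h_not
  obtain ⟨n, hn⟩ := hA
  let p : ℝ[X] := ∑ k ∈ Finset.range (n + 2), C ((k.factorial : ℝ)⁻¹ * f ((A ^ k) u)) * X ^ k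
  have h_eval (t : ℝ) : p.eval t = f (exp (t • A) u) := by
    have h_zero : (t • A) ^ (n + 2) = 0 := by
      rw [_root_.smul_pow, pow_eq_zero_of_le (n.le_add_right 2) hn, smul_zero]
    rw [eval_exp_of_pow_eq_zero h_zero, map_sum, eval_finsetSum]
    refine Finset.sum_congr rfl fun k _ ↦ ?_
    rw [_root_.smul_pow, _root_.smul_apply, map_smul, map_smul]
    simp only [eval_mul, eval_C, eval_pow, eval_X, smul_eq_mul]
    ring
  have h_root (m : ℕ) : p.eval (m : ℝ) = 0 := by
    let : NormedAlgebra ℚ (E →L[ℝ] E) := NormedAlgebra.restrictScalars ℚ ℝ _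
    have h_mem : ((exp A) ^ m) u ∈ U := by
      induction m with
      | zero => exact hu
      | succ m ih => rw [pow_succ']; exact hU _ ih
    rw [h_eval, Nat.cast_smul_eq_nsmul, exp_nsmul]
    exact hf h_mem
  have hp : p = 0 := eq_zero_of_infinite_isRoot p <|
    (Set.infinite_range_of_injective Nat.cast_injective).mono (Set.range_subset_iff.2 h_root)
  have h_coeff : p.coeff 1 = f (A u) := by
    rw [finsetSum_coeff, Finset.sum_eq_single 1 _ (by simp)]
    · simp
    · exact fun k _ hk ↦ by rw [coeff_C_mul_X_pow, if_neg hk.symm]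
  exact hf_ne (by rw [← h_coeff, hp, coeff_zero])

lemma continuous_exp_smul_apply {a : ℝ → ℝ} {u : ℝ → E} (ha : Continuous a) (hu : Continuous u) :
    Continuous fun t ↦ exp (a t • A) (u t) := by
  let : NormedAlgebra ℚ (E →L[ℝ] E) := NormedAlgebra.restrictScalars ℚ ℝ _
  exact (exp_continuous.comp (ha.smul continuous_const)).clm_apply hu

lemma eq_exp_smul_of_map_add {Φ : ℝ → E →L[ℝ] E} (h_zero : Φ 0 = 1)
    (h_add : ∀ s t, Φ (s + t) = Φ s * Φ t) (h_deriv : ∀ x, HasDerivAt (Φ · x) (A x) 0) (t : ℝ) :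
    Φ t = exp (t • A) := by
  let : NormedAlgebra ℚ (E →L[ℝ] E) := NormedAlgebra.restrictScalars ℚ ℝ _
  have hΦ (x : E) (s : ℝ) : HasDerivAt (Φ · x) (A (Φ s x)) s := by
    have h_sub : HasDerivAt (fun r ↦ Φ (r - s) (Φ s x)) (A (Φ s x)) s :=
      HasDerivAt.comp_sub_const s s (by simpa using h_deriv (Φ s x))
    refine h_sub.congr_of_eventuallyEq (.of_forall fun r ↦ ?_)
    change Φ r x = (Φ (r - s) * Φ s) x
    rw [← h_add, sub_add_cancel]
  have h_prod (x : E) (s : ℝ) : HasDerivAt (fun r ↦ exp (r • -A) (Φ r x)) 0 s := by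
    convert (hasDerivAt_exp_smul_const (-A) s).clm_apply (hΦ x s) using 1
    simp
  ext x
  have h_const : exp (t • -A) (Φ t x) = x := by
    simpa [h_zero] using is_const_of_deriv_eq_zero (fun s ↦ (h_prod x s).differentiableAt)
      (fun s ↦ (h_prod x s).deriv) t 0
  have h_inv : exp (t • A) * exp (t • -A) = 1 := by
    rw [← exp_add_of_commute (by simp [Commute.neg_right_iff]), smul_neg, add_neg_cancel, exp_zero]
  calc Φ t x = (exp (t • A) * exp (t • -A)) (Φ t x) := by rw [h_inv]; rfl
    _ = exp (t • A) x := congrArg (exp (t • A) ·) h_const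

end OperatorExponential

section GroupCalculus

variable {E : Type*} [NormedAddCommGroup E] [NormedSpace ℝ E]
  {G : Type*} [TopologicalSpace G] [Group G] [ChartedSpace E G]

/-- `HasFDerivAtOne f A x` states that `f x` is the identity of the group `G`, and that `f` has
derivative `A` at `x`. As `f x` is the identity, `A` takes values in the model space `E` of `G`,
which is identified with the tangent space at the identity. -/
structure HasFDerivAtOne {V : Type*} [NormedAddCommGroup V] [NormedSpace ℝ V] (f : V → G)
    (A : V →L[ℝ] E) (x : V) : Prop where
  apply_eq_one : f x = 1
  hasMFDerivAt : HasMFDerivAt 𝓘(ℝ, V) 𝓘(ℝ, E) f x A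

section LieGroup

variable [LieGroup 𝓘(ℝ, E) 1 G]

lemma hasMFDerivAt_mul_one_one :
    HasMFDerivAt (𝓘(ℝ, E).prod 𝓘(ℝ, E)) 𝓘(ℝ, E) (fun p : G × G ↦ p.1 * p.2) (1, 1)
      (ContinuousLinearMap.fst ℝ E E + ContinuousLinearMap.snd ℝ E E) := by
  have h_mul : MDifferentiableAt (𝓘(ℝ, E).prod 𝓘(ℝ, E)) 𝓘(ℝ, E) (fun p : G × G ↦ p.1 * p.2)
      (1, 1) := (contMDiff_mul 𝓘(ℝ, E) 1).mdifferentiableAt one_ne_zero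
  refine h_mul.hasMFDerivAt.congr_mfderiv ?_
  have h_left : mfderiv 𝓘(ℝ, E) 𝓘(ℝ, E) (fun z : G ↦ z * 1) 1 = .id ℝ E := by
    rw [show (fun z : G ↦ z * 1) = id from funext mul_one]
    exact mfderiv_id
  have h_right : mfderiv 𝓘(ℝ, E) 𝓘(ℝ, E) (fun z : G ↦ 1 * z) 1 = .id ℝ E := by
    rw [show (fun z : G ↦ 1 * z) = id from funext one_mul]
    exact mfderiv_id
  rw [mfderiv_prod_eq_add_comp h_mul, h_left, h_right]
  rfl

lemma hasMFDerivAt_conj (g : G) :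
    HasMFDerivAt 𝓘(ℝ, E) 𝓘(ℝ, E) (fun x : G ↦ g * x * g⁻¹) 1
      (mfderiv 𝓘(ℝ, E) 𝓘(ℝ, E) (fun x : G ↦ g * x * g⁻¹) 1) :=
  ((contMDiff_const.mul contMDiff_id).mul contMDiff_const).mdifferentiableAt
    (n := 1) one_ne_zero |>.hasMFDerivAt

/-- The adjoint representation of `G` on its tangent space at the identity, so that
`AdMap g w = adjoint g w`. -/
def adjoint : G →* (E →L[ℝ] E) where
  toFun g := mfderiv 𝓘(ℝ, E) 𝓘(ℝ, E) (fun x : G ↦ g * x * g⁻¹) 1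
  map_one' := by
    rw [show (fun x : G ↦ 1 * x * 1⁻¹) = id by ext; simp]
    exact mfderiv_id
  map_mul' g h := by
    rw [show (fun x : G ↦ g * h * x * (g * h)⁻¹) =
      (fun x ↦ g * x * g⁻¹) ∘ (fun x ↦ h * x * h⁻¹) by ext; simp [mul_assoc]]
    have h_conj : HasMFDerivAt 𝓘(ℝ, E) 𝓘(ℝ, E) (fun x ↦ g * x * g⁻¹) (h * 1 * h⁻¹)
        (mfderiv 𝓘(ℝ, E) 𝓘(ℝ, E) (fun x : G ↦ g * x * g⁻¹) 1 : E →L[ℝ] E) := by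
      rw [mul_one, mul_inv_cancel]
      exact hasMFDerivAt_conj g
    exact (h_conj.comp 1 (hasMFDerivAt_conj h)).mfderiv

lemma adjoint_eq_one_of_mem_center {z : G} (hz : z ∈ Subgroup.center G) :
    adjoint z = (1 : E →L[ℝ] E) := by
  have h_conj : (fun x : G ↦ z * x * z⁻¹) = id := by
    ext x
    rw [← Subgroup.mem_center_iff.1 hz x, mul_inv_cancel_right, id]
  change mfderiv 𝓘(ℝ, E) 𝓘(ℝ, E) (fun x : G ↦ z * x * z⁻¹) 1 = _
  rw [h_conj]
  exact mfderiv_id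

namespace HasFDerivAtOne

variable {V : Type*} [NormedAddCommGroup V] [NormedSpace ℝ V] {f g : V → G} {A B : V →L[ℝ] E}
  {x : V}

lemma mul (hf : HasFDerivAtOne f A x) (hg : HasFDerivAtOne g B x) :
    HasFDerivAtOne (fun y ↦ f y * g y) (A + B) x := by
  refine ⟨by rw [hf.apply_eq_one, hg.apply_eq_one, one_mul], ?_⟩
  have h_mul : HasMFDerivAt (𝓘(ℝ, E).prod 𝓘(ℝ, E)) 𝓘(ℝ, E) (fun p : G × G ↦ p.1 * p.2)
      (f x, g x) (ContinuousLinearMap.fst ℝ E E + ContinuousLinearMap.snd ℝ E E) := by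
    rw [hf.apply_eq_one, hg.apply_eq_one]
    exact hasMFDerivAt_mul_one_one
  exact h_mul.comp x (hf.hasMFDerivAt.prodMk hg.hasMFDerivAt)

lemma inv (hf : HasFDerivAtOne f A x) : HasFDerivAtOne (fun y ↦ (f y)⁻¹) (-A) x := by
  have h_one : (f x)⁻¹ = 1 := by rw [hf.apply_eq_one, inv_one]
  obtain ⟨B, hB⟩ : ∃ B : V →L[ℝ] E, HasFDerivAtOne (fun y ↦ (f y)⁻¹) B x :=
    ⟨_, h_one, (((contMDiff_inv 𝓘(ℝ, E) 1).mdifferentiableAt one_ne_zero).comp x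
      hf.hasMFDerivAt.mdifferentiableAt).hasMFDerivAt⟩
  have h_const : HasMFDerivAt 𝓘(ℝ, V) 𝓘(ℝ, E) (fun _ ↦ (1 : G)) x (A + B) :=
    (hf.mul hB).hasMFDerivAt.congr_of_eventuallyEq (.of_forall fun y ↦ (mul_inv_cancel (f y)).symm)
  have h_add : A + B = 0 := hasMFDerivAt_unique h_const (hasMFDerivAt_const _ _)
  rwa [← eq_neg_of_add_eq_zero_right h_add]

lemma conj (hf : HasFDerivAtOne f A x) (h : G) :
    HasFDerivAtOne (fun y ↦ h * f y * h⁻¹) (adjoint h ∘L A) x := by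
  refine ⟨by rw [hf.apply_eq_one, mul_one, mul_inv_cancel], ?_⟩
  have h_conj : HasMFDerivAt 𝓘(ℝ, E) 𝓘(ℝ, E) (fun z : G ↦ h * z * h⁻¹) (f x)
      (adjoint h : E →L[ℝ] E) := by
    rw [hf.apply_eq_one]
    exact hasMFDerivAt_conj h
  exact h_conj.comp x hf.hasMFDerivAt

end HasFDerivAtOne

end LieGroup

lemma HasFDerivAtOne.comp {V W : Type*} [NormedAddCommGroup V] [NormedSpace ℝ V]
    [NormedAddCommGroup W] [NormedSpace ℝ W] {f : V → G} {A : V →L[ℝ] E} {a : W → V}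
    {a' : W →L[ℝ] V} {y : W} (hf : HasFDerivAtOne f A (a y)) (ha : HasFDerivAt a a' y) :
    HasFDerivAtOne (fun z ↦ f (a z)) (A ∘L a') y :=
  ⟨hf.apply_eq_one, hf.hasMFDerivAt.comp y ha.hasMFDerivAt⟩

end GroupCalculus

section LogarithmicDerivative

open ContinuousLinearMap (toSpanSingleton)
open scoped Topology

variable {E : Type*} [NormedAddCommGroup E] [NormedSpace ℝ E]
  {G : Type*} [TopologicalSpace G] [Group G] [ChartedSpace E G]

/-- The left logarithmic derivative of the curve `c` at time `t` is `ξ`: the left translate of `c`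
passing through the identity at time `t` has velocity `ξ` there. -/
def HasLogDerivAt (c : ℝ → G) (ξ : E) (t : ℝ) : Prop :=
  HasFDerivAtOne (fun s ↦ (c t)⁻¹ * c s) (toSpanSingleton ℝ ξ) t

lemma HasLogDerivAt.comp {c : ℝ → G} {a : ℝ → ℝ} {ξ : E} {a' t : ℝ}
    (hc : HasLogDerivAt c ξ (a t)) (ha : HasDerivAt a a' t) :
    HasLogDerivAt (fun s ↦ c (a s)) (a' • ξ) t := by
  have h_comp := HasFDerivAtOne.comp hc ha.hasFDerivAt
  rwa [ContinuousLinearMap.comp_toSpanSingleton, ContinuousLinearMap.toSpanSingleton_apply]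
    at h_comp

section LieGroup

variable [LieGroup 𝓘(ℝ, E) 1 G] {c d : ℝ → G} {ξ η : E} {t : ℝ}

lemma HasLogDerivAt.mul (hc : HasLogDerivAt c ξ t) (hd : HasLogDerivAt d η t) :
    HasLogDerivAt (fun s ↦ c s * d s) (adjoint (d t)⁻¹ ξ + η) t := by
  have h_mul := (HasFDerivAtOne.conj hc (d t)⁻¹).mul hd
  rw [ContinuousLinearMap.comp_toSpanSingleton, ← ContinuousLinearMap.toSpanSingleton_add] at h_mul
  have h_eq : (fun s ↦ (c t * d t)⁻¹ * (c s * d s)) =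
      fun s ↦ (d t)⁻¹ * ((c t)⁻¹ * c s) * (d t)⁻¹⁻¹ * ((d t)⁻¹ * d s) := by
    ext s
    group
  rwa [HasLogDerivAt, h_eq]

lemma HasLogDerivAt.inv (hc : HasLogDerivAt c ξ t) :
    HasLogDerivAt (fun s ↦ (c s)⁻¹) (-adjoint (c t) ξ) t := by
  have h_inv := (HasFDerivAtOne.conj hc (c t)).inv
  rw [ContinuousLinearMap.comp_toSpanSingleton] at h_inv
  have h_eq : (fun s ↦ (c t)⁻¹⁻¹ * (c s)⁻¹) = fun s ↦ (c t * ((c t)⁻¹ * c s) * (c t)⁻¹)⁻¹ := by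
    ext s
    group
  rw [HasLogDerivAt, h_eq]
  convert h_inv using 1
  ext
  simp

lemma HasLogDerivAt.hasMFDerivAt_zero (hc : HasLogDerivAt c (0 : E) t) :
    HasMFDerivAt 𝓘(ℝ, ℝ) 𝓘(ℝ, E) c t (0 : ℝ →L[ℝ] E) := by
  have h_translate : MDifferentiableAt 𝓘(ℝ, E) 𝓘(ℝ, E) (fun x : G ↦ c t * x) ((c t)⁻¹ * c t) :=
    (contMDiff_mul_left (n := 1)).mdifferentiableAt one_ne_zero
  refine ((h_translate.hasMFDerivAt.comp t hc.hasMFDerivAt).congr_mfderiv ?_).congr_of_eventuallyEq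
    (.of_forall fun s ↦ (mul_inv_cancel_left (c t) (c s)).symm)
  rw [ContinuousLinearMap.toSpanSingleton_zero]
  exact ContinuousLinearMap.comp_zero _

lemma eq_of_hasLogDerivAt_zero [CompleteSpace E] (hc : ∀ t, HasLogDerivAt c (0 : E) t) (s t : ℝ) :
    c s = c t := by
  have h_zero : (0 : ℝ →L[ℝ] E) = (1 : ℝ →L[ℝ] ℝ).smulRight (0 : E) := by
    ext
    simp
  have h_const : IsLocallyConstant c := by
    refine (IsLocallyConstant.iff_eventually_eq c).2 fun t ↦ ?_
    refine isMIntegralCurveAt_eventuallyEq_of_contMDiffAt_boundaryless (I := 𝓘(ℝ, E))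
      (v := fun _ ↦ (0 : E)) (γ' := fun _ ↦ c t)
      ((Bundle.contMDiff_zeroSection ℝ (TangentSpace 𝓘(ℝ, E) : G → Type _)).contMDiffAt)
      (.of_forall fun s ↦ ?_) (.of_forall fun s ↦ ?_) rfl
    · exact (hc s).hasMFDerivAt_zero.congr_mfderiv h_zero
    · exact (hasMFDerivAt_const _ _).congr_mfderiv h_zero
  exact h_const.apply_eq_of_preconnectedSpace s t

end LieGroup

namespace IsOneParamSubgroup

variable {ψ φ : ℝ → G} {v : E}

lemma map_neg (hψ : IsOneParamSubgroup ψ v) (t : ℝ) : ψ (-t) = (ψ t)⁻¹ := by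
  rw [eq_inv_iff_mul_eq_one, ← hψ.2.1, neg_add_cancel, hψ.1]

lemma of_hasFDerivAtOne (h_deriv : HasFDerivAtOne ψ (toSpanSingleton ℝ v) 0)
    (h_add : ∀ s t, ψ (s + t) = ψ s * ψ t)
    (h_smooth : ContMDiff 𝓘(ℝ, ℝ) 𝓘(ℝ, E) (⊤ : ℕ∞) ψ) : IsOneParamSubgroup ψ v :=
  ⟨h_deriv.apply_eq_one, h_add, h_smooth, (DFunLike.congr_fun h_deriv.hasMFDerivAt.mfderiv 1).trans
    (ContinuousLinearMap.toSpanSingleton_apply_one ℝ v)⟩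

lemma hasFDerivAtOne (hψ : IsOneParamSubgroup ψ v) :
    HasFDerivAtOne ψ (toSpanSingleton ℝ v) 0 := by
  refine ⟨hψ.1, (hψ.2.2.1.mdifferentiableAt (by simp)).hasMFDerivAt.congr_mfderiv ?_⟩
  exact ContinuousLinearMap.ext_ring
    (hψ.2.2.2.trans (ContinuousLinearMap.toSpanSingleton_apply_one ℝ v).symm)

lemma hasLogDerivAt (hψ : IsOneParamSubgroup ψ v) (t : ℝ) : HasLogDerivAt ψ v t := by
  have h_shift : HasFDerivAtOne ψ (toSpanSingleton ℝ v) (t - t) := by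
    rw [sub_self]
    exact hψ.hasFDerivAtOne
  have h_comp := h_shift.comp (a := fun s ↦ s - t) ((hasDerivAt_id t).sub_const t).hasFDerivAt
  have h_eq : (fun s ↦ (ψ t)⁻¹ * ψ s) = fun s ↦ ψ (s - t) := by
    ext s
    rw [← hψ.map_neg, ← hψ.2.1, neg_add_eq_sub]
  rw [HasLogDerivAt, h_eq]
  rwa [ContinuousLinearMap.comp_toSpanSingleton, ContinuousLinearMap.toSpanSingleton_apply_one]
    at h_comp

lemma comp_mul (hψ : IsOneParamSubgroup ψ v) (a : ℝ) :
    IsOneParamSubgroup (fun t ↦ ψ (t * a)) (a • v) := by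
  have h_base : HasFDerivAtOne ψ (toSpanSingleton ℝ v) (0 * a) := by
    rw [zero_mul]
    exact hψ.hasFDerivAtOne
  have h_comp := h_base.comp (a := (· * a)) (hasDerivAt_mul_const a).hasFDerivAt
  rw [ContinuousLinearMap.comp_toSpanSingleton, ContinuousLinearMap.toSpanSingleton_apply]
    at h_comp
  refine .of_hasFDerivAtOne h_comp (fun s t ↦ ?_)
    (hψ.2.2.1.comp (contDiff_id.mul contDiff_const).contMDiff)
  rw [add_mul, hψ.2.1]

protected lemma unique [LieGroup 𝓘(ℝ, E) 1 G] [CompleteSpace E] (hψ : IsOneParamSubgroup ψ v)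
    (hφ : IsOneParamSubgroup φ v) : ψ = φ := by
  ext t
  have h_log (t : ℝ) : HasLogDerivAt (fun t ↦ ψ t * (φ t)⁻¹) (0 : E) t := by
    simpa using (hψ.hasLogDerivAt t).mul (hφ.hasLogDerivAt t).inv
  have h_const := eq_of_hasLogDerivAt_zero h_log t 0
  rwa [hψ.1, hφ.1, inv_one, one_mul, mul_inv_eq_one] at h_const

protected lemma conj [LieGroup 𝓘(ℝ, E) (⊤ : ℕ∞) G] (hψ : IsOneParamSubgroup ψ v) (g : G) :
    IsOneParamSubgroup (fun t ↦ g * ψ t * g⁻¹) (adjoint g v) := by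
  have h_conj := hψ.hasFDerivAtOne.conj g
  rw [ContinuousLinearMap.comp_toSpanSingleton] at h_conj
  refine .of_hasFDerivAtOne h_conj (fun s t ↦ ?_)
    ((contMDiff_const.mul hψ.2.2.1).mul contMDiff_const)
  rw [hψ.2.1]
  group

end IsOneParamSubgroup

end LogarithmicDerivative

section Exponential

open LieAlgebra

variable {E : Type*} [NormedAddCommGroup E] [NormedSpace ℝ E]
  {L : Type*} [LieRing L] [LieAlgebra ℝ L]
  {G : Type*} [TopologicalSpace G] [Group G] [ChartedSpace E G]

lemma integralSubgroup_mono {e : L ≃ₗ[ℝ] E} {S T : Set L} (h : S ⊆ T) :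
    integralSubgroup (G := G) e S ≤ integralSubgroup e T :=
  Subgroup.closure_mono fun _ ⟨v, hv, hψ⟩ ↦ ⟨v, h hv, hψ⟩

variable [LieGroup 𝓘(ℝ, E) (⊤ : ℕ∞) G]

/-- `exp` is the exponential map of the Lie group `G`, whose Lie algebra is `L` by means of the
identification `e` of `L` with the tangent space at the identity. -/
structure IsLieExp (e : L ≃ₗ[ℝ] E) (exp : L → G) : Prop where
  isOneParamSubgroup (v : L) : IsOneParamSubgroup (fun t : ℝ ↦ exp (t • v)) (e v)
  hasDerivAt_adjoint (v w : L) :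
    HasDerivAt (fun t : ℝ ↦ adjoint (exp (t • v)) (e w)) (e ⁅v, w⁆) 0

variable {e : L ≃ₗ[ℝ] E} {exp : L → G} {U : Submodule ℝ L} {v : L}

namespace IsLieExp

lemma exp_zero (h : IsLieExp e exp) : exp 0 = 1 := by
  simpa using (h.isOneParamSubgroup 0).1

lemma exp_neg (h : IsLieExp e exp) (v : L) : exp (-v) = (exp v)⁻¹ := by
  simpa using (h.isOneParamSubgroup v).map_neg 1

end IsLieExp

variable [FiniteDimensional ℝ E]

/-- The adjoint representation of `L`, acting on the tangent space `E` through the identification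
`e` of `L` with `E`. -/
def adTangent (e : L ≃ₗ[ℝ] E) (v : L) : E →L[ℝ] E :=
  Module.End.toContinuousLinearMap E (e.conjAlgEquiv ℝ (ad ℝ L v))

lemma adTangent_apply (e : L ≃ₗ[ℝ] E) (v : L) (x : E) : adTangent e v x = e ⁅v, e.symm x⁆ := rfl

lemma adTangent_smul (e : L ≃ₗ[ℝ] E) (t : ℝ) (v : L) :
    adTangent e (t • v) = t • adTangent e v := by
  ext
  simp [adTangent_apply]

lemma isNilpotent_adTangent (e : L ≃ₗ[ℝ] E) {v : L} (hv : IsNilpotent (ad ℝ L v)) :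
    IsNilpotent (adTangent e v) :=
  (hv.map (e.conjAlgEquiv ℝ)).map (Module.End.toContinuousLinearMap E)

lemma exists_isLieExp (hexp : ∀ v : E, ∃ ψ : ℝ → G, IsOneParamSubgroup ψ v)
    (hbracket : ∀ (v w : L) (ψ : ℝ → G), IsOneParamSubgroup ψ (e v) →
      HasDerivAt (fun t : ℝ ↦ AdMap (ψ t) (e w)) (e ⁅v, w⁆) 0) :
    ∃ exp : L → G, IsLieExp e exp := by
  have : CompleteSpace E := FiniteDimensional.complete ℝ E
  choose ψ hψ using hexp
  have h_smul (v : L) : (fun t : ℝ ↦ ψ (e (t • v)) 1) = ψ (e v) := by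
    ext t
    calc ψ (e (t • v)) 1 = ψ (t • e v) 1 := by rw [map_smul]
      _ = ψ (e v) (1 * t) := congrFun ((hψ _).unique ((hψ (e v)).comp_mul t)) 1
      _ = ψ (e v) t := by rw [one_mul]
  refine ⟨fun v ↦ ψ (e v) 1, fun v ↦ ?_, fun v w ↦ hbracket v w _ ?_⟩ <;>
  · rw [h_smul]
    exact hψ (e v)

namespace IsLieExp

lemma eq_exp (h : IsLieExp e exp) {ψ : ℝ → G} (hψ : IsOneParamSubgroup ψ (e v)) (t : ℝ) :
    ψ t = exp (t • v) :=
  have : CompleteSpace E := FiniteDimensional.complete ℝ E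
  congrFun (hψ.unique (h.isOneParamSubgroup v)) t

lemma conj_exp (h : IsLieExp e exp) (g : G) (v : L) :
    g * exp v * g⁻¹ = exp (e.symm (adjoint g (e v))) := by
  have h_conj := (h.isOneParamSubgroup v).conj g
  rw [← e.apply_symm_apply (adjoint g (e v))] at h_conj
  simpa using h.eq_exp h_conj 1

lemma integralSubgroup_eq_closure (h : IsLieExp e exp) (U : Submodule ℝ L) :
    integralSubgroup (G := G) e U = Subgroup.closure (exp '' U) := by
  refine congrArg Subgroup.closure (Set.ext fun g ↦ ⟨?_, ?_⟩)
  · rintro ⟨v, hv, ψ, hψ, t, rfl⟩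
    exact ⟨t • v, U.smul_mem t hv, (h.eq_exp hψ t).symm⟩
  · rintro ⟨v, hv, rfl⟩
    exact ⟨v, hv, _, h.isOneParamSubgroup v, 1, by rw [one_smul]⟩

lemma exp_mem_integralSubgroup (h : IsLieExp e exp) (hv : v ∈ U) :
    exp v ∈ integralSubgroup (G := G) e U := by
  rw [h.integralSubgroup_eq_closure]
  exact Subgroup.subset_closure ⟨v, hv, rfl⟩

lemma adjoint_exp (h : IsLieExp e exp) (v : L) :
    adjoint (exp v) = NormedSpace.exp (adTangent e v) := by
  have : CompleteSpace E := FiniteDimensional.complete ℝ E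
  have h_eq : adjoint (exp ((1 : ℝ) • v)) = NormedSpace.exp ((1 : ℝ) • adTangent e v) := by
    refine eq_exp_smul_of_map_add (Φ := fun t : ℝ ↦ adjoint (exp (t • v))) ?_ (fun s t ↦ ?_)
      (fun x ↦ ?_) 1
    · rw [zero_smul, h.exp_zero, map_one]
    · rw [← map_mul, ← (h.isOneParamSubgroup v).2.1]
    · simpa [adTangent_apply] using h.hasDerivAt_adjoint v (e.symm x)
  simpa using h_eq

lemma continuous_adjoint_exp (h : IsLieExp e exp) (v : L) {a : ℝ → ℝ} {u : ℝ → E}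
    (ha : Continuous a) (hu : Continuous u) :
    Continuous fun t ↦ adjoint (exp (a t • v)) (u t) := by
  have : CompleteSpace E := FiniteDimensional.complete ℝ E
  simp only [h.adjoint_exp, adTangent_smul]
  exact continuous_exp_smul_apply ha hu

lemma adjoint_exp_mem (h : IsLieExp e exp) (hv : ∀ u ∈ U, ⁅v, u⁆ ∈ U) {x : E}
    (hx : e.symm x ∈ U) : e.symm (adjoint (exp v) x) ∈ U := by
  have : CompleteSpace E := FiniteDimensional.complete ℝ E
  rw [h.adjoint_exp]
  refine exp_apply_mem (U := U.comap e.symm.toLinearMap) (Submodule.closed_of_finiteDimensional _)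
    (fun u hu ↦ ?_) hx
  simpa [adTangent_apply] using hv _ hu

lemma adjoint_exp_sub_mem (h : IsLieExp e exp) (hv : ∀ u ∈ U, ⁅v, u⁆ ∈ U) {w : L}
    (hw : ⁅v, w⁆ ∈ U) : e.symm (adjoint (exp v) (e w) - e w) ∈ U := by
  have : CompleteSpace E := FiniteDimensional.complete ℝ E
  rw [h.adjoint_exp]
  refine exp_apply_sub_mem (U := U.comap e.symm.toLinearMap)
    (Submodule.closed_of_finiteDimensional _) (fun u hu ↦ ?_) ?_
  · simpa [adTangent_apply] using hv _ hu
  · simpa [adTangent_apply] using hw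

lemma lie_mem_of_adjoint_exp_mem (h : IsLieExp e exp) (hv : IsNilpotent (ad ℝ L v))
    (hU : ∀ u ∈ U, e.symm (adjoint (exp v) (e u)) ∈ U) {u : L} (hu : u ∈ U) : ⁅v, u⁆ ∈ U := by
  have : CompleteSpace E := FiniteDimensional.complete ℝ E
  rw [h.adjoint_exp] at hU
  have h_mem := apply_mem_of_exp_apply_mem (U := U.comap e.symm.toLinearMap)
    (isNilpotent_adTangent e hv) (fun x hx ↦ by simpa using hU _ hx) (u := e u) (by simpa using hu)
  simpa [adTangent_apply] using h_mem

end IsLieExp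

end Exponential

section SolvableSubalgebra

open LieAlgebra

variable {k L : Type*} [Field k] [LieRing L] [LieAlgebra k L]

lemma isSolvable_of_le {K K' : LieSubalgebra k L} [LieAlgebra.IsSolvable K] (h : K' ≤ K) :
    LieAlgebra.IsSolvable K' :=
  (LieSubalgebra.inclusion_injective h).lieAlgebra_isSolvable

lemma exists_functional_eq_zero_on_brackets (K : LieSubalgebra k L) [LieAlgebra.IsSolvable K]
    [Nontrivial K] :
    ∃ f : L →ₗ[k] k, (∃ x ∈ K, f x = 1) ∧ ∀ y ∈ K, ∀ z ∈ K, f ⁅y, z⁆ = 0 := by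
  obtain ⟨x, -, hx⟩ := SetLike.exists_of_lt (derivedSeries_lt_top_of_solvable k K)
  obtain ⟨f, hfx, hf⟩ := Submodule.exists_le_ker_of_notMem
    (p := (derivedSeries k K 1).toSubmodule) hx
  obtain ⟨g, rfl⟩ := LinearMap.exists_extend (p := K.toSubmodule) f
  refine ⟨g, ⟨(g x)⁻¹ • (x : L), K.smul_mem _ x.2, ?_⟩, fun y hy z hz ↦ ?_⟩
  · rw [map_smul, smul_eq_mul]
    exact inv_mul_cancel₀ hfx
  · exact hf (LieSubmodule.lie_mem_lie (LieSubmodule.mem_top (⟨y, hy⟩ : K))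
      (LieSubmodule.mem_top (⟨z, hz⟩ : K)))

lemma exists_lt_codimension_one (K : LieSubalgebra k L) [LieAlgebra.IsSolvable K] [Nontrivial K] :
    ∃ K' < K, ∃ x ∈ K, (∀ y ∈ K, ⁅x, y⁆ ∈ K') ∧ ∃ f : L →ₗ[k] k, ∀ y ∈ K, y - f y • x ∈ K' := by
  obtain ⟨f, ⟨x, hxK, hfx⟩, hf⟩ := exists_functional_eq_zero_on_brackets K
  let K' : LieSubalgebra k L :=
    { K.toSubmodule ⊓ LinearMap.ker f with
      lie_mem' := fun hy hz ↦ ⟨K.lie_mem hy.1 hz.1, hf _ hy.1 _ hz.1⟩ }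
  have hx : x ∉ K' := fun h ↦ one_ne_zero (hfx.symm.trans h.2)
  refine ⟨K', lt_of_le_not_ge (fun y hy ↦ hy.1) fun h ↦ hx (h hxK), x, hxK,
    fun y hy ↦ ⟨K.lie_mem hxK hy, hf x hxK y hy⟩, f,
    fun y hy ↦ ⟨K.sub_mem hy (K.smul_mem _ hxK), ?_⟩⟩
  simp [hfx]

end SolvableSubalgebra

section Curves

variable {E : Type*} [NormedAddCommGroup E] [NormedSpace ℝ E] [FiniteDimensional ℝ E]
  {L : Type*} [LieRing L] [LieAlgebra ℝ L]
  {G : Type*} [TopologicalSpace G] [Group G] [ChartedSpace E G] [LieGroup 𝓘(ℝ, E) (⊤ : ℕ∞) G]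
  {e : L ≃ₗ[ℝ] E} {exp : L → G}

namespace IsLieExp

lemma curve_mem_integralSubgroup (h : IsLieExp e exp) (K : LieSubalgebra ℝ L)
    [LieAlgebra.IsSolvable K] {c : ℝ → G} {ξ : ℝ → E} (hξ : Continuous ξ)
    (hc : ∀ t, HasLogDerivAt c (ξ t) t) (hK : ∀ t, e.symm (ξ t) ∈ K) (h_zero : c 0 = 1) (t : ℝ) :
    c t ∈ integralSubgroup (G := G) e (K : Set L) := by
  have : FiniteDimensional ℝ L := e.symm.finiteDimensional
  induction hn : Module.finrank ℝ K using Nat.strong_induction_on generalizing K c ξ with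
  | _ n ih =>
  rcases subsingleton_or_nontrivial K with _ | _
  · have : CompleteSpace E := FiniteDimensional.complete ℝ E
    have hc_zero (s : ℝ) : HasLogDerivAt c (0 : E) s := by
      have hξ_zero : ξ s = 0 :=
        e.symm.map_eq_zero_iff.1 (congrArg Subtype.val (Subsingleton.elim ⟨_, hK s⟩ (0 : K)))
      exact hξ_zero ▸ hc s
    rw [eq_of_hasLogDerivAt_zero hc_zero t 0, h_zero]
    exact one_mem _
  obtain ⟨K', hK', x, hxK, h_lie, f, hf⟩ := exists_lt_codimension_one K
  have : LieAlgebra.IsSolvable K' := isSolvable_of_le hK'.le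
  let a (s : ℝ) : ℝ := f (e.symm (ξ s))
  have ha : Continuous a := (f ∘ₗ e.symm.toLinearMap).continuous_of_finiteDimensional.comp hξ
  let b (s : ℝ) : ℝ := ∫ r in (0 : ℝ)..s, a r
  have hb (s : ℝ) : HasDerivAt b (a s) s := (ha.integral_hasStrictDerivAt 0 s).hasDerivAt
  let d (s : ℝ) : G := c s * (exp (b s • x))⁻¹
  have hd (s : ℝ) : HasLogDerivAt d (adjoint (exp (b s • x)) (ξ s - a s • e x)) s := by
    have h_mul := (hc s).mul (((h.isOneParamSubgroup x).hasLogDerivAt (b s)).comp (hb s)).inv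
    rwa [inv_inv, ← sub_eq_add_neg, ← map_sub] at h_mul
  have hd_mem : d t ∈ integralSubgroup (G := G) e (K' : Set L) := by
    refine ih _ (hn ▸ Submodule.finrank_lt_finrank_of_lt hK') K' ?_ hd (fun s ↦ ?_) ?_ rfl
    · exact h.continuous_adjoint_exp x
        (continuous_iff_continuousAt.2 fun s ↦ (hb s).continuousAt)
        (hξ.sub (ha.smul continuous_const))
    · refine h.adjoint_exp_mem (U := K'.toSubmodule) (fun u hu ↦ ?_) ?_
      · rw [smul_lie]
        exact K'.smul_mem _ (h_lie u (hK'.le hu))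
      · simpa using hf _ (hK s)
    · simp [d, b, h_zero, h.exp_zero]
  rw [← inv_mul_cancel_right (c t) (exp (b t • x))]
  exact mul_mem (integralSubgroup_mono (SetLike.coe_subset_coe.2 hK'.le) hd_mem)
    (h.exp_mem_integralSubgroup (U := K.toSubmodule) (K.smul_mem _ hxK))

lemma exp_mul_exp_mul_inv_mem (h : IsLieExp e exp) (K : LieSubalgebra ℝ L)
    [LieAlgebra.IsSolvable K] {X Y : L} (hX : ∀ u ∈ K, ⁅X, u⁆ ∈ K) (hY : ∀ u ∈ K, ⁅Y, u⁆ ∈ K)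
    (hXY : ⁅X, Y⁆ ∈ K) :
    exp X * exp Y * (exp (X + Y))⁻¹ ∈ integralSubgroup (G := G) e (K : Set L) := by
  let ξ (t : ℝ) : E := adjoint (exp (t • (X + Y))) (adjoint (exp (-t • Y)) (e X) - e X)
  have hξ : Continuous ξ := h.continuous_adjoint_exp _ continuous_id
    ((h.continuous_adjoint_exp _ continuous_neg continuous_const).sub continuous_const)
  let c (t : ℝ) : G := exp (t • X) * exp (t • Y) * (exp (t • (X + Y)))⁻¹
  have hc (t : ℝ) : HasLogDerivAt c (ξ t) t := by
    have h_log (v : L) := (h.isOneParamSubgroup v).hasLogDerivAt t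
    have h_mul := ((h_log X).mul (h_log Y)).mul (h_log (X + Y)).inv
    rw [inv_inv, ← sub_eq_add_neg, ← map_sub, ← h.exp_neg, ← neg_smul, map_add,
      add_sub_add_right_eq_sub] at h_mul
    exact h_mul
  have h_mem (t : ℝ) : e.symm (ξ t) ∈ K := by
    refine h.adjoint_exp_mem (U := K.toSubmodule) (fun u hu ↦ ?_)
      (h.adjoint_exp_sub_mem (fun u hu ↦ ?_) ?_)
    · rw [smul_lie, add_lie]
      exact K.smul_mem _ (K.add_mem (hX u hu) (hY u hu))
    · rw [smul_lie]
      exact K.smul_mem _ (hY u hu)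
    · rw [smul_lie, ← lie_skew]
      exact K.smul_mem _ (K.neg_mem hXY)
  simpa [c] using h.curve_mem_integralSubgroup K hξ hc h_mem (by simp [c, h.exp_zero]) 1

end IsLieExp

end Curves

section NilpotentSubalgebra

open LieModule

variable {E : Type*} [NormedAddCommGroup E] [NormedSpace ℝ E] [FiniteDimensional ℝ E]
  {L : Type*} [LieRing L] [LieAlgebra ℝ L]
  {G : Type*} [TopologicalSpace G] [Group G] [ChartedSpace E G] [LieGroup 𝓘(ℝ, E) (⊤ : ℕ∞) G]
  {e : L ≃ₗ[ℝ] E} {exp : L → G}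

namespace IsLieExp

lemma mul_exp_mem_image_of_lie_mem (h : IsLieExp e exp) {𝔫 K U : LieSubalgebra ℝ L}
    [LieAlgebra.IsSolvable K] (hU : U ≤ 𝔫) (hK : ∀ X ∈ 𝔫, ∀ u ∈ K, ⁅X, u⁆ ∈ K)
    (hUK : ∀ Y ∈ U, ∀ X ∈ 𝔫, ⁅Y, X⁆ ∈ K)
    (hK_exp : ∀ q ∈ integralSubgroup (G := G) e (K : Set L), ∀ X ∈ 𝔫, q * exp X ∈ exp '' 𝔫)
    {p : G} (hp : p ∈ integralSubgroup (G := G) e (U : Set L)) {X : L} (hX : X ∈ 𝔫) :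
    p * exp X ∈ exp '' 𝔫 := by
  have h_step {Y Z : L} (hY : Y ∈ U) (hZ : Z ∈ 𝔫) : exp Y * exp Z ∈ exp '' 𝔫 := by
    rw [← inv_mul_cancel_right (exp Y * exp Z) (exp (Y + Z))]
    exact hK_exp _ (h.exp_mul_exp_mul_inv_mem K (hK Y (hU hY)) (hK Z hZ) (hUK Y hY Z hZ)) _
      (𝔫.add_mem (hU hY) hZ)
  change p ∈ integralSubgroup (G := G) e (U.toSubmodule : Set L) at hp
  rw [h.integralSubgroup_eq_closure] at hp
  induction hp using Subgroup.closure_induction_left with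
  | one => exact ⟨X, hX, (one_mul _).symm⟩
  | mul_left _ hy p _ ih =>
    obtain ⟨Y, hY, rfl⟩ := hy
    obtain ⟨Z, hZ, hpX⟩ := ih
    rw [mul_assoc, ← hpX]
    exact h_step hY hZ
  | inv_mul_cancel _ hy p _ ih =>
    obtain ⟨Y, hY, rfl⟩ := hy
    obtain ⟨Z, hZ, hpX⟩ := ih
    rw [mul_assoc, ← hpX, ← h.exp_neg]
    exact h_step (U.neg_mem hY) hZ

lemma mul_exp_mem_image_of_chain (h : IsLieExp e exp) {𝔫 : LieSubalgebra ℝ L}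
    [LieAlgebra.IsSolvable 𝔫] {U : ℕ → LieSubalgebra ℝ L} {n : ℕ} (hU : ∀ k, U k ≤ 𝔫)
    (hU_ideal : ∀ k, ∀ X ∈ 𝔫, ∀ Y ∈ U k, ⁅X, Y⁆ ∈ U k)
    (hU_succ : ∀ k, ∀ Y ∈ U k, ∀ X ∈ 𝔫, ⁅Y, X⁆ ∈ U (k + 1)) (hUn : U n = ⊥) :
    ∀ p ∈ integralSubgroup (G := G) e (U 0 : Set L), ∀ X ∈ 𝔫, p * exp X ∈ exp '' 𝔫 := by
  suffices h_all : ∀ k ≤ n, ∀ p ∈ integralSubgroup (G := G) e (U k : Set L), ∀ X ∈ 𝔫,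
      p * exp X ∈ exp '' 𝔫 from h_all 0 n.zero_le
  intro k hk
  induction hk using Nat.decreasingInduction with
  | self =>
    intro p hp X hX
    have hp_closure : p ∈ Subgroup.closure (exp '' ((⊥ : Submodule ℝ L) : Set L)) := by
      rw [hUn] at hp
      exact h.integralSubgroup_eq_closure ⊥ ▸ hp
    have hp_one : p = 1 := by
      rwa [Submodule.bot_coe, Set.image_singleton, h.exp_zero, Subgroup.closure_singleton_one,
        Subgroup.mem_bot] at hp_closure
    exact ⟨X, hX, by rw [hp_one, one_mul]⟩
  | of_succ k _ ih =>
    have : LieAlgebra.IsSolvable (U (k + 1)) := isSolvable_of_le (hU _)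
    exact fun p hp X hX ↦ h.mul_exp_mem_image_of_lie_mem (hU k) (hU_ideal _) (hU_succ k) ih hp hX

lemma integralSubgroup_subset_image_exp (h : IsLieExp e exp) (𝔫 : LieSubalgebra ℝ L)
    [LieRing.IsNilpotent 𝔫] : (integralSubgroup (G := G) e 𝔫 : Set G) ⊆ exp '' 𝔫 := by
  let U (k : ℕ) : LieSubalgebra ℝ L :=
    (LieIdeal.toLieSubalgebra ℝ 𝔫 (lowerCentralSeries ℝ 𝔫 𝔫 k)).map 𝔫.incl
  have hU (k : ℕ) : U k ≤ 𝔫 := by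
    rintro _ ⟨u, -, rfl⟩
    exact u.2
  have hU_ideal (k : ℕ) : ∀ X ∈ 𝔫, ∀ Y ∈ U k, ⁅X, Y⁆ ∈ U k := by
    rintro X hX _ ⟨Y, hY, rfl⟩
    exact ⟨⁅(⟨X, hX⟩ : 𝔫), Y⁆, LieSubmodule.lie_mem _ hY, rfl⟩
  have hU_succ (k : ℕ) : ∀ Y ∈ U k, ∀ X ∈ 𝔫, ⁅Y, X⁆ ∈ U (k + 1) := by
    rintro _ ⟨Y, hY, rfl⟩ X hX
    refine ⟨⁅Y, (⟨X, hX⟩ : 𝔫)⁆, ?_, rfl⟩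
    change ⁅Y, (⟨X, hX⟩ : 𝔫)⁆ ∈ lowerCentralSeries ℝ 𝔫 𝔫 (k + 1)
    rw [← lie_skew, neg_mem_iff, lowerCentralSeries_succ]
    exact LieSubmodule.lie_mem_lie (LieSubmodule.mem_top _) hY
  obtain ⟨n, hn⟩ := LieModule.IsNilpotent.nilpotent ℝ 𝔫 𝔫
  have hUn : U n = ⊥ := by
    refine eq_bot_iff.2 ?_
    rintro _ ⟨u, hu, rfl⟩
    change u ∈ lowerCentralSeries ℝ 𝔫 𝔫 n at hu
    rw [hn, LieSubmodule.mem_bot] at hu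
    rw [hu, map_zero]
    exact zero_mem _
  intro g hg
  have hgU : g ∈ integralSubgroup (G := G) e (U 0 : Set L) := by
    refine integralSubgroup_mono (fun v hv ↦ ?_) hg
    exact ⟨⟨v, hv⟩, LieSubmodule.mem_top (R := ℝ) (L := 𝔫) (⟨v, hv⟩ : 𝔫), rfl⟩
  simpa [h.exp_zero] using
    h.mul_exp_mem_image_of_chain hU hU_ideal hU_succ hUn g hgU 0 𝔫.zero_mem

end IsLieExp

end NilpotentSubalgebra

section Generation

open Filter Topology Module

lemma map_nhds_eq_of_contMDiffAt {V E M : Type*} [NormedAddCommGroup V] [NormedSpace ℝ V]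
    [CompleteSpace V] [NormedAddCommGroup E] [NormedSpace ℝ E] [CompleteSpace E]
    [TopologicalSpace M] [ChartedSpace E M] {f : V → M} {A : V →L[ℝ] E} {x : V}
    (hf : ContMDiffAt 𝓘(ℝ, V) 𝓘(ℝ, E) 1 f x) (hA : HasMFDerivAt 𝓘(ℝ, V) 𝓘(ℝ, E) f x A)
    (hA_surj : A.range = ⊤) : map f (𝓝 x) = 𝓝 (f x) := by
  let φ := chartAt E (f x)
  have h_strict : HasStrictFDerivAt (φ ∘ f) A x := by
    refine (contMDiffAt_iff_target.1 hf).2.contDiffAt.hasStrictFDerivAt' ?_ one_ne_zero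
    have h_chart := hA.2
    simp only [writtenInExtChartAt, mfld_simps] at h_chart
    exact hasFDerivWithinAt_univ.1 h_chart
  have h_left_inv : φ.symm ∘ φ ∘ f =ᶠ[𝓝 x] f :=
    hf.continuousAt.eventually (φ.eventually_left_inverse (mem_chart_source E (f x)))
  calc map f (𝓝 x) = map φ.symm (map (φ ∘ f) (𝓝 x)) := by
        rw [map_map, map_congr h_left_inv]
    _ = map φ.symm (𝓝 (φ (f x))) := by
        rw [h_strict.map_nhds_eq_of_surj hA_surj, Function.comp_apply]
    _ = 𝓝 (f x) := φ.symm_map_nhds_eq (mem_chart_source E (f x))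

lemma subgroup_eq_top_of_mem_nhds_one {G : Type*} [Group G] [TopologicalSpace G]
    [IsTopologicalGroup G] [ConnectedSpace G] {H : Subgroup G} (hH : (H : Set G) ∈ 𝓝 1) :
    H = ⊤ := by
  have h_open : IsOpen (H : Set G) := H.isOpen_of_mem_nhds hH
  exact SetLike.coe_injective
    (IsClopen.eq_univ ⟨H.isClosed_of_isOpen h_open, h_open⟩ ⟨1, H.one_mem⟩)

variable {E : Type*} [NormedAddCommGroup E] [NormedSpace ℝ E]
  {G : Type*} [TopologicalSpace G] [Group G] [ChartedSpace E G]

section ListProd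

variable [LieGroup 𝓘(ℝ, E) 1 G] {V ι : Type*} [NormedAddCommGroup V] [NormedSpace ℝ V]
  {f : ι → V → G} {A : ι → V →L[ℝ] E} {x : V}

lemma HasFDerivAtOne.list_prod (hf : ∀ i, HasFDerivAtOne (f i) (A i) x) (l : List ι) :
    HasFDerivAtOne (fun y ↦ (l.map (f · y)).prod) (l.map A).sum x := by
  induction l with
  | nil => exact ⟨rfl, hasMFDerivAt_const _ _⟩
  | cons i l ih => simpa only [List.map_cons, List.prod_cons, List.sum_cons] using (hf i).mul ih

lemma contMDiff_list_map_prod (hf : ∀ i, ContMDiff 𝓘(ℝ, V) 𝓘(ℝ, E) 1 (f i)) (l : List ι) :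
    ContMDiff 𝓘(ℝ, V) 𝓘(ℝ, E) 1 (fun y ↦ (l.map (f · y)).prod) := by
  induction l with
  | nil => exact contMDiff_const
  | cons i l ih =>
    simp only [List.map_cons, List.prod_cons]
    exact (hf i).mul ih

end ListProd

variable [FiniteDimensional ℝ E] [LieGroup 𝓘(ℝ, E) (⊤ : ℕ∞) G] [ConnectedSpace G]
  {L : Type*} [LieRing L] [LieAlgebra ℝ L] {e : L ≃ₗ[ℝ] E} {exp : L → G} {H : Subgroup G}

namespace IsLieExp

lemma eq_top_of_exp_smul_basis_mem (h : IsLieExp e exp) {ι : Type*} (b : Basis ι ℝ L)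
    (hH : ∀ i, ∀ t : ℝ, exp (t • b i) ∈ H) : H = ⊤ := by
  have : CompleteSpace E := FiniteDimensional.complete ℝ E
  have : IsTopologicalGroup G := topologicalGroup_of_lieGroup 𝓘(ℝ, E) 1
  have : FiniteDimensional ℝ L := e.symm.finiteDimensional
  have := FiniteDimensional.fintypeBasisIndex b
  let l := (Finset.univ : Finset ι).toList
  let c (i : ι) : E →L[ℝ] ℝ := LinearMap.toContinuousLinearMap ((b.map e).coord i)
  let F (y : E) : G := (l.map fun i ↦ exp (c i y • b i)).prod
  have hF_mem (y : E) : F y ∈ H := by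
    refine Subgroup.list_prod_mem _ fun g hg ↦ ?_
    obtain ⟨i, -, rfl⟩ := List.mem_map.1 hg
    exact hH _ _
  have hF_smooth : ContMDiff 𝓘(ℝ, E) 𝓘(ℝ, E) 1 F :=
    contMDiff_list_map_prod (f := fun i y ↦ exp (c i y • b i)) (fun i ↦
      ((h.isOneParamSubgroup (b i)).2.2.1.of_le (by simp)).comp (c i).contDiff.contMDiff) l
  let A (i : ι) : E →L[ℝ] E := .toSpanSingleton ℝ (e (b i)) ∘L c i
  have h_factor (i : ι) : HasFDerivAtOne (fun y ↦ exp (c i y • b i)) (A i) 0 := by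
    have h_one : HasFDerivAtOne (fun t : ℝ ↦ exp (t • b i)) (.toSpanSingleton ℝ (e (b i)))
        (c i 0) := by
      rw [map_zero]
      exact (h.isOneParamSubgroup (b i)).hasFDerivAtOne
    exact h_one.comp (c i).hasFDerivAt
  have hA : (l.map A).sum = .id ℝ E := by
    ext y
    rw [Finset.sum_map_toList]
    simpa [A, c] using (b.map e).sum_repr y
  have hF : HasFDerivAtOne F (.id ℝ E) 0 := hA ▸ HasFDerivAtOne.list_prod h_factor l
  have h_map : map F (𝓝 0) = 𝓝 1 :=
    hF.apply_eq_one ▸ map_nhds_eq_of_contMDiffAt (hF_smooth 0) hF.hasMFDerivAt LinearMap.range_id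
  exact subgroup_eq_top_of_mem_nhds_one (h_map ▸ mem_map.2 (univ_mem' hF_mem))

lemma eq_top_of_exp_smul_mem (h : IsLieExp e exp) {S : Set L} (hS : Submodule.span ℝ S = ⊤)
    (hH : ∀ v ∈ S, ∀ t : ℝ, exp (t • v) ∈ H) : H = ⊤ :=
  h.eq_top_of_exp_smul_basis_mem (.ofSpan hS.ge) fun i ↦
    hH _ (Basis.ofSpan_subset hS.ge ⟨i, rfl⟩)

end IsLieExp

end Generation

section Center

open LieAlgebra

variable {E : Type*} [NormedAddCommGroup E] [NormedSpace ℝ E] [FiniteDimensional ℝ E]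
  {L : Type*} [LieRing L] [LieAlgebra ℝ L]
  {G : Type*} [TopologicalSpace G] [Group G] [ChartedSpace E G] [LieGroup 𝓘(ℝ, E) (⊤ : ℕ∞) G]
  {e : L ≃ₗ[ℝ] E} {exp : L → G}

namespace IsLieExp

lemma adjoint_mem_of_mem_integralSubgroup (h : IsLieExp e exp) {K U : Submodule ℝ L}
    (hU : ∀ v ∈ K, ∀ u ∈ U, ⁅v, u⁆ ∈ U) {g : G} (hg : g ∈ integralSubgroup (G := G) e K) :
    ∀ u ∈ U, e.symm (adjoint g (e u)) ∈ U := by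
  have h_exp {v : L} (hv : v ∈ K) {g : G} (hg : ∀ u ∈ U, e.symm (adjoint g (e u)) ∈ U) :
      ∀ u ∈ U, e.symm (adjoint (exp v * g) (e u)) ∈ U := by
    intro u hu
    rw [map_mul]
    exact h.adjoint_exp_mem (hU v hv) (hg u hu)
  rw [h.integralSubgroup_eq_closure] at hg
  induction hg using Subgroup.closure_induction_left with
  | one => simp
  | mul_left _ hx g _ ih =>
    obtain ⟨v, hv, rfl⟩ := hx
    exact h_exp hv ih
  | inv_mul_cancel _ hx g _ ih =>
    obtain ⟨v, hv, rfl⟩ := hx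
    rw [← h.exp_neg]
    exact h_exp (K.neg_mem hv) ih

lemma mem_cartan_of_mul_exp_mem_center (h : IsLieExp e exp) {𝔴 : LieSubalgebra ℝ L}
    [𝔴.IsCartanSubalgebra] {w : G} (hw : w ∈ integralSubgroup (G := G) e (𝔴 : Set L)) {X : L}
    (hX : IsNilpotent (ad ℝ L X)) (hz : w * exp X ∈ Subgroup.center G) : X ∈ 𝔴 := by
  have h_adjoint : adjoint (exp X) = (adjoint w⁻¹ : E →L[ℝ] E) := by
    rw [← inv_mul_cancel_left w (exp X), map_mul, adjoint_eq_one_of_mem_center hz, mul_one]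
  have h_pres : ∀ u ∈ 𝔴.toSubmodule, e.symm (adjoint (exp X) (e u)) ∈ 𝔴.toSubmodule := by
    rw [h_adjoint]
    exact h.adjoint_mem_of_mem_integralSubgroup (K := 𝔴.toSubmodule)
      (fun v hv u hu ↦ 𝔴.lie_mem hv hu) (inv_mem hw)
  rw [← LieSubalgebra.IsCartanSubalgebra.self_normalizing (H := 𝔴),
    LieSubalgebra.mem_normalizer_iff]
  exact fun u hu ↦ h.lie_mem_of_adjoint_exp_mem hX h_pres hu

variable [ConnectedSpace G]

lemma integralSubgroup_sup_eq_top (h : IsLieExp e exp) {U V : Submodule ℝ L} (hUV : U ⊔ V = ⊤) :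
    integralSubgroup (G := G) e U ⊔ integralSubgroup e V = ⊤ := by
  refine h.eq_top_of_exp_smul_mem (S := U ∪ V) ?_ ?_
  · rw [Submodule.span_union, Submodule.span_eq, Submodule.span_eq, hUV]
  · rintro v (hv | hv) t
    · exact Subgroup.mem_sup_left (h.exp_mem_integralSubgroup (U.smul_mem t hv))
    · exact Subgroup.mem_sup_right (h.exp_mem_integralSubgroup (V.smul_mem t hv))

lemma adjoint_mem_of_lieIdeal (h : IsLieExp e exp) (I : LieIdeal ℝ L) (g : G) :
    ∀ u ∈ I, e.symm (adjoint g (e u)) ∈ I := by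
  have h_top : integralSubgroup (G := G) e ((⊤ : Submodule ℝ L) : Set L) = ⊤ := by
    simpa using h.integralSubgroup_sup_eq_top (top_sup_eq (⊤ : Submodule ℝ L))
  exact h.adjoint_mem_of_mem_integralSubgroup (U := I.toSubmodule)
    (fun v _ u hu ↦ I.lie_mem hu) (h_top ▸ Subgroup.mem_top g)

lemma normal_integralSubgroup (h : IsLieExp e exp) (I : LieIdeal ℝ L) :
    (integralSubgroup (G := G) e (I : Set L)).Normal := by
  have h_conj (g : G) : (integralSubgroup (G := G) e (I.toSubmodule : Set L)).map
      (MulAut.conj g).toMonoidHom ≤ integralSubgroup e I.toSubmodule := by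
    rw [h.integralSubgroup_eq_closure, MonoidHom.map_closure, Subgroup.closure_le]
    rintro _ ⟨_, ⟨v, hv, rfl⟩, rfl⟩
    refine Subgroup.subset_closure ⟨_, h.adjoint_mem_of_lieIdeal I g v hv, ?_⟩
    exact (h.conj_exp g v).symm
  exact ⟨fun n hn g ↦ h_conj g ⟨n, hn, rfl⟩⟩

lemma exists_mul_exp_eq [IsSolvable L] (h : IsLieExp e exp) (𝔴 : LieSubalgebra ℝ L)
    [𝔴.IsCartanSubalgebra] (g : G) :
    ∃ w ∈ integralSubgroup (G := G) e (𝔴 : Set L), ∃ X ∈ derivedSeries ℝ L 1, w * exp X = g := by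
  have : FiniteDimensional ℝ L := e.symm.finiteDimensional
  have := isNilpotent_derivedSeries_one (k := ℝ) (L := L)
  have := h.normal_integralSubgroup (derivedSeries ℝ L 1)
  have hg : g ∈ integralSubgroup (G := G) e (𝔴 : Set L) ⊔
      integralSubgroup e (derivedSeries ℝ L 1 : Set L) :=
    h.integralSubgroup_sup_eq_top (cartan_sup_derivedSeries 𝔴) ▸ Subgroup.mem_top g
  obtain ⟨w, hw, n, hn, rfl⟩ := Subgroup.mem_sup_of_normal_right.1 hg
  obtain ⟨X, hX, rfl⟩ := h.integralSubgroup_subset_image_exp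
    (LieIdeal.toLieSubalgebra ℝ L (derivedSeries ℝ L 1)) hn
  exact ⟨w, hw, X, hX, rfl⟩

end IsLieExp

theorem center_le_cartan_subgroup_general [ConnectedSpace G] [IsSolvable L]
    (hexp : ∀ v : E, ∃ ψ : ℝ → G, IsOneParamSubgroup ψ v)
    (hbracket : ∀ (v w : L) (ψ : ℝ → G), IsOneParamSubgroup ψ (e v) →
      HasDerivAt (fun t : ℝ ↦ AdMap (ψ t) (e w)) (e ⁅v, w⁆) 0)
    (𝔴 : LieSubalgebra ℝ L) [𝔴.IsCartanSubalgebra] :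
    Subgroup.center G ≤ integralSubgroup (G := G) e (𝔴 : Set L) := by
  have : FiniteDimensional ℝ L := e.symm.finiteDimensional
  obtain ⟨exp, h⟩ := exists_isLieExp hexp hbracket
  intro z hz
  obtain ⟨w, hw, X, hX, rfl⟩ := h.exists_mul_exp_eq 𝔴 z
  have hX_nil : IsNilpotent (ad ℝ L X) := isNilpotent_toEnd_of_mem_derivedSeries hX
  have hX_cartan : X ∈ 𝔴 := h.mem_cartan_of_mul_exp_mem_center hw hX_nil hz
  exact mul_mem hw (h.exp_mem_integralSubgroup (U := 𝔴.toSubmodule) hX_cartan)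

end Center

/-- Let `G` be a connected, simply connected solvable Lie group whose Lie algebra is
`L` (identified with the tangent space at the identity via `eq`, compatibly with
one-parameter subgroups and the adjoint action), and let `W` be the connected subgroup
corresponding to a Cartan subalgebra `𝔴` of `L`.  Then the center of `G` is contained
in `W`. -/
theorem center_le_cartan_subgroup
    {E : Type*} [NormedAddCommGroup E] [NormedSpace ℝ E] [FiniteDimensional ℝ E]
    {G : Type*} [TopologicalSpace G] [Group G] [ChartedSpace E G] [LieGroup 𝓘(ℝ, E) (⊤ : ℕ∞) G]
    [IsTopologicalGroup G] [SimplyConnectedSpace G]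
    {L : Type*} [LieRing L] [LieAlgebra ℝ L] [FiniteDimensional ℝ L]
    [LieAlgebra.IsSolvable L]
    (eq : L ≃ₗ[ℝ] E)
    (hexp : ∀ v : E, ∃ ψ : ℝ → G, IsOneParamSubgroup ψ v)
    (hbracket : ∀ (v w : L) (ψ : ℝ → G), IsOneParamSubgroup ψ (eq v) →
      HasDerivAt (fun t : ℝ => AdMap (ψ t) (eq w)) (eq ⁅v, w⁆) 0)
    (𝔴 : LieSubalgebra ℝ L) (h𝔴 : 𝔴.IsCartanSubalgebra) :
    Subgroup.center G ≤ integralSubgroup (G := G) eq (𝔴 : Set L) :=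
  center_le_cartan_subgroup_general hexp hbracket 𝔴

end
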